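/- Let $s \in (0,1)$ and $C \geq 1$ be such that every positive harmonic function on the unit ball $\mathbb{B}^n$ satisfies the $(s, C)$-Harnack inequality in $\mathbb{B}^n$. Then for all $x, y \in \mathbb{B}^n$ the Harnack metric satisfies $h_{\mathbb{B}^n}(x,y) \leq \left(1 + \frac{\rho_{\mathbb{B}^n}(x,y)}{\log((1+s)/(1-s))}\right) \log C$, where $\rho_{\mathbb{B}^n}$ is the hyperbolic distance of the unit ball. -/

import Mathlib

open Metric Set

/-- `u` is harmonic on `G ⊆ ℝⁿ`: it is twice continuously differentiable on `G` and satisfies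
the Laplace equation `∑ i, ∂²u/∂xᵢ² = 0` on `G`. -/
def IsHarmonicOn {n : ℕ} (u : EuclideanSpace ℝ (Fin n) → ℝ)
    (G : Set (EuclideanSpace ℝ (Fin n))) : Prop :=
  ContDiffOn ℝ 2 u G ∧ ∀ x ∈ G,
    ∑ i : Fin n, iteratedFDeriv ℝ 2 u x
      ![EuclideanSpace.single i 1, EuclideanSpace.single i 1] = 0

/-- `u` satisfies the `(s, C)`-Harnack inequality in `G`. -/
def SatisfiesHarnack {n : ℕ} (u : EuclideanSpace ℝ (Fin n) → ℝ)
    (G : Set (EuclideanSpace ℝ (Fin n))) (s C : ℝ) : Prop :=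
  ∀ x ∈ G, ∀ r > (0 : ℝ), ball x r ⊆ G →
    ∀ z₁ ∈ closedBall x (s * r), ∀ z₂ ∈ closedBall x (s * r), u z₁ ≤ C * u z₂

/-- The Harnack metric on a domain `G`: `h_G(x,y) = sup |log(u(x)/u(y))|`, the supremum being
taken over all positive harmonic functions `u` on `G`. -/
noncomputable def harnackMetric {n : ℕ} (G : Set (EuclideanSpace ℝ (Fin n)))
    (x y : EuclideanSpace ℝ (Fin n)) : ℝ :=
  sSup {t : ℝ | ∃ u : EuclideanSpace ℝ (Fin n) → ℝ,
    (∀ z ∈ G, 0 < u z) ∧ IsHarmonicOn u G ∧ t = |Real.log (u x / u y)|}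

/-- The hyperbolic distance of the unit ball `𝔹ⁿ`, determined by
`sinh²(ρ(x,y)/2) = |x-y|² / ((1-|x|²)(1-|y|²))`. -/
noncomputable def rhoB {n : ℕ} (x y : EuclideanSpace ℝ (Fin n)) : ℝ :=
  2 * Real.arsinh (‖x - y‖ / Real.sqrt ((1 - ‖x‖ ^ 2) * (1 - ‖y‖ ^ 2)))

/-!
The hyperbolic ball with diameter `x, y` is a Euclidean ball, and it lies in
`closedBall c (s * (1 - ‖c‖))`, `c` its Euclidean centre, as soon as `tanh (ρ(x, y) / 2) ≤ s`,
that is `ρ(x, y) ≤ L := log ((1 + s) / (1 - s))`. One application of the Harnack inequality then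
gives `u x ≤ C * u y`. In general, cut the hyperbolic geodesic from `x` to `y` into `⌈ρ(x, y) / L⌉`
pieces of length at most `L` and multiply the inequalities obtained on the pieces. The point at a
given distance along the geodesic is found in the hyperboloid model, where geodesics are
intersections with planes through the origin.
-/

section PoincareBall

open Real

variable {E : Type*} [NormedAddCommGroup E] {x y : E} {s t C : ℝ}

/-! ### The hyperbolic distance of the unit ball -/

/-- The hyperbolic distance of the unit ball of a real inner product space, which is `rhoB` on
`ℝⁿ`. The formula is written down for any normed group. -/
noncomputable def poincareDist (x y : E) : ℝ :=
  2 * arsinh (‖x - y‖ / √((1 - ‖x‖ ^ 2) * (1 - ‖y‖ ^ 2)))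

lemma one_sub_norm_sq_pos (hx : ‖x‖ < 1) : 0 < 1 - ‖x‖ ^ 2 :=
  sub_pos.2 (pow_lt_one₀ (norm_nonneg x) hx two_ne_zero)

lemma poincareDist_nonneg (x y : E) : 0 ≤ poincareDist x y :=
  mul_nonneg zero_le_two (arsinh_nonneg_iff.2 (by positivity))

lemma poincareDist_self (x : E) : poincareDist x x = 0 := by
  simp [poincareDist]

lemma poincareDist_comm (x y : E) : poincareDist x y = poincareDist y x := by
  rw [poincareDist, poincareDist, norm_sub_rev, mul_comm (1 - ‖x‖ ^ 2)]

lemma eq_of_poincareDist_nonpos (hx : ‖x‖ < 1) (hy : ‖y‖ < 1) (h : poincareDist x y ≤ 0) :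
    x = y := by
  have hp := one_sub_norm_sq_pos hx
  have hq := one_sub_norm_sq_pos hy
  have harsinh : arsinh (‖x - y‖ / √((1 - ‖x‖ ^ 2) * (1 - ‖y‖ ^ 2))) ≤ 0 := by
    rw [poincareDist] at h
    linarith
  have hnorm : ‖x - y‖ ≤ 0 := by
    rwa [arsinh_nonpos_iff, div_le_iff₀ (by positivity), zero_mul] at harsinh
  exact sub_eq_zero.1 (norm_le_zero_iff.1 hnorm)

lemma sinh_half_poincareDist_sq (hx : ‖x‖ < 1) (hy : ‖y‖ < 1) :
    sinh (poincareDist x y / 2) ^ 2 = ‖x - y‖ ^ 2 / ((1 - ‖x‖ ^ 2) * (1 - ‖y‖ ^ 2)) := by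
  have hp := one_sub_norm_sq_pos hx
  have hq := one_sub_norm_sq_pos hy
  rw [poincareDist, mul_div_cancel_left₀ _ two_ne_zero, sinh_arsinh, div_pow,
    sq_sqrt (by positivity)]

lemma norm_sub_sq_le_of_poincareDist_le (hs : s ∈ Ioo 0 1) (hx : ‖x‖ < 1) (hy : ‖y‖ < 1)
    (hxy : poincareDist x y ≤ log ((1 + s) / (1 - s))) :
    ‖x - y‖ ^ 2 ≤ s ^ 2 * ((1 - ‖x‖ ^ 2) * (1 - ‖y‖ ^ 2) + ‖x - y‖ ^ 2) := by
  have hp := one_sub_norm_sq_pos hx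
  have hq := one_sub_norm_sq_pos hy
  have hs' : s ∈ Ioo (-1) 1 := ⟨by linarith [hs.1], hs.2⟩
  have hs_sq : 0 < 1 - s ^ 2 := by nlinarith [hs.1, hs.2]
  have hhalf : poincareDist x y / 2 ≤ artanh s := by
    rw [artanh_eq_half_log (Ioo_subset_Icc_self hs')]
    linarith
  have hsinh : sinh (poincareDist x y / 2) ^ 2 ≤ (s / √(1 - s ^ 2)) ^ 2 := by
    rw [← sinh_artanh hs']
    have := poincareDist_nonneg x y
    exact pow_le_pow_left₀ (sinh_nonneg_iff.2 (by positivity)) (sinh_le_sinh.2 hhalf) 2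
  rw [sinh_half_poincareDist_sq hx hy, div_pow, sq_sqrt hs_sq.le,
    div_le_div_iff₀ (by positivity) hs_sq] at hsinh
  linarith

/-! ### The hyperboloid model -/

variable [InnerProductSpace ℝ E]

variable (E) in
/-- The Lorentzian bilinear form `a * b - ⟪v, w⟫` on `ℝ × E`, whose unit vectors with positive
first coordinate form the hyperboloid model of hyperbolic space. -/
noncomputable def minkowskiForm : LinearMap.BilinForm ℝ (ℝ × E) :=
  (LinearMap.mul ℝ ℝ).compl₁₂ (.fst ℝ ℝ E) (.fst ℝ ℝ E) -
    (innerₗ E).compl₁₂ (.snd ℝ ℝ E) (.snd ℝ ℝ E)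

lemma minkowskiForm_apply (P Q : ℝ × E) :
    minkowskiForm E P Q = P.1 * Q.1 - inner ℝ P.2 Q.2 :=
  rfl

lemma minkowskiForm_comm (P Q : ℝ × E) : minkowskiForm E P Q = minkowskiForm E Q P := by
  rw [minkowskiForm_apply, minkowskiForm_apply, mul_comm, real_inner_comm]

/-- The isometry from the ball model onto the hyperboloid model: stereographic projection from
`(-1, 0)`, inverse to `ofHyperboloid`. -/
noncomputable def toHyperboloid (x : E) : ℝ × E :=
  ((1 + ‖x‖ ^ 2) / (1 - ‖x‖ ^ 2), (2 / (1 - ‖x‖ ^ 2)) • x)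

/-- Stereographic projection of the hyperboloid onto the unit ball, from `(-1, 0)`. -/
noncomputable def ofHyperboloid (P : ℝ × E) : E :=
  (1 + P.1)⁻¹ • P.2

lemma toHyperboloid_fst_pos (hx : ‖x‖ < 1) : 0 < (toHyperboloid x).1 :=
  div_pos (by positivity) (one_sub_norm_sq_pos hx)

lemma minkowskiForm_toHyperboloid (hx : ‖x‖ < 1) (hy : ‖y‖ < 1) :
    minkowskiForm E (toHyperboloid x) (toHyperboloid y) = cosh (poincareDist x y) := by
  have hp := one_sub_norm_sq_pos hx
  have hq := one_sub_norm_sq_pos hy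
  have hcosh : cosh (poincareDist x y) = 2 * sinh (poincareDist x y / 2) ^ 2 + 1 := by
    conv_lhs => rw [← mul_div_cancel₀ (poincareDist x y) two_ne_zero, cosh_two_mul, cosh_sq]
    ring
  rw [hcosh, sinh_half_poincareDist_sq hx hy, minkowskiForm_apply, toHyperboloid, toHyperboloid,
    real_inner_smul_left, real_inner_smul_right, norm_sub_sq_real]
  field_simp
  ring

lemma minkowskiForm_toHyperboloid_self (hx : ‖x‖ < 1) :
    minkowskiForm E (toHyperboloid x) (toHyperboloid x) = 1 := by
  rw [minkowskiForm_toHyperboloid hx hx, poincareDist_self, cosh_zero]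

section ofHyperboloid

variable {P : ℝ × E}

lemma one_sub_norm_ofHyperboloid_sq (hP : minkowskiForm E P P = 1) (hP₀ : 0 < P.1) :
    1 - ‖ofHyperboloid P‖ ^ 2 = 2 / (1 + P.1) := by
  have hnorm : ‖P.2‖ ^ 2 = P.1 ^ 2 - 1 := by
    rw [minkowskiForm_apply, real_inner_self_eq_norm_sq] at hP
    linarith
  rw [ofHyperboloid, norm_smul, mul_pow, hnorm, norm_eq_abs, sq_abs]
  field_simp
  ring

lemma norm_ofHyperboloid_lt_one (hP : minkowskiForm E P P = 1) (hP₀ : 0 < P.1) :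
    ‖ofHyperboloid P‖ < 1 := by
  have hpos : 0 < 1 - ‖ofHyperboloid P‖ ^ 2 := by
    rw [one_sub_norm_ofHyperboloid_sq hP hP₀]
    positivity
  exact (sq_lt_one_iff₀ (norm_nonneg _)).1 (sub_pos.1 hpos)

lemma toHyperboloid_ofHyperboloid (hP : minkowskiForm E P P = 1) (hP₀ : 0 < P.1) :
    toHyperboloid (ofHyperboloid P) = P := by
  have hsub := one_sub_norm_ofHyperboloid_sq hP hP₀
  have hadd : 1 + ‖ofHyperboloid P‖ ^ 2 = 2 - 2 / (1 + P.1) := by linarith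
  ext1
  · rw [toHyperboloid, hadd, hsub]
    field_simp
    ring
  · rw [toHyperboloid, hsub, ofHyperboloid, smul_smul, div_div_cancel₀ two_ne_zero,
      mul_inv_cancel₀ (by positivity), one_smul]

end ofHyperboloid

lemma exists_minkowskiForm_eq_cosh {P Q : ℝ × E} {d : ℝ} (hP : minkowskiForm E P P = 1)
    (hQ : minkowskiForm E Q Q = 1) (hPQ : minkowskiForm E P Q = cosh d) (hP₀ : 0 < P.1)
    (hQ₀ : 0 < Q.1) (ht : 0 ≤ t) (htd : t < d) :
    ∃ R : ℝ × E, minkowskiForm E R R = 1 ∧ 0 < R.1 ∧ minkowskiForm E P R = cosh t ∧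
      minkowskiForm E R Q = cosh (d - t) := by
  have hd : 0 < sinh d := sinh_pos_iff.2 (ht.trans_lt htd)
  have hdt : 0 < sinh (d - t) := sinh_pos_iff.2 (sub_pos.2 htd)
  have ht' : 0 ≤ sinh t := sinh_nonneg_iff.2 ht
  have hQP : minkowskiForm E Q P = cosh d := by rw [minkowskiForm_comm, hPQ]
  have hd_sq := cosh_sq d
  have ht_sq := cosh_sq t
  -- The point at distance `t` from `P` on the geodesic, by the hyperbolic analogue of slerp.
  refine ⟨(sinh (d - t) / sinh d) • P + (sinh t / sinh d) • Q, ?_, ?_, ?_, ?_⟩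
  · simp only [map_add, map_smul, LinearMap.add_apply, LinearMap.smul_apply, smul_eq_mul, hP, hQ,
      hPQ, hQP, sinh_sub]
    field_simp
    linear_combination sinh d ^ 2 * ht_sq - sinh t ^ 2 * hd_sq
  · exact add_pos_of_pos_of_nonneg (mul_pos (div_pos hdt hd) hP₀)
      (mul_nonneg (div_nonneg ht' hd.le) hQ₀.le)
  · simp only [map_add, map_smul, smul_eq_mul, hP, hPQ, sinh_sub]
    field_simp
    ring
  · simp only [map_add, map_smul, LinearMap.add_apply, LinearMap.smul_apply, smul_eq_mul, hQ,
      hPQ, sinh_sub, cosh_sub]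
    field_simp
    linear_combination -sinh t * hd_sq

lemma exists_poincareDist_eq (hx : ‖x‖ < 1) (hy : ‖y‖ < 1) (ht : 0 ≤ t)
    (hty : t ≤ poincareDist x y) :
    ∃ z : E, ‖z‖ < 1 ∧ poincareDist x z = t ∧ poincareDist z y = poincareDist x y - t := by
  rcases hty.eq_or_lt with rfl | hlt
  · exact ⟨y, hy, rfl, by rw [poincareDist_self, sub_self]⟩
  obtain ⟨R, hR, hR₀, hxR, hRy⟩ := exists_minkowskiForm_eq_cosh
    (minkowskiForm_toHyperboloid_self hx) (minkowskiForm_toHyperboloid_self hy)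
    (minkowskiForm_toHyperboloid hx hy) (toHyperboloid_fst_pos hx) (toHyperboloid_fst_pos hy)
    ht hlt
  have hz : ‖ofHyperboloid R‖ < 1 := norm_ofHyperboloid_lt_one hR hR₀
  rw [← toHyperboloid_ofHyperboloid hR hR₀, minkowskiForm_toHyperboloid hx hz] at hxR
  rw [← toHyperboloid_ofHyperboloid hR hR₀, minkowskiForm_toHyperboloid hz hy] at hRy
  exact ⟨ofHyperboloid R, hz, cosh_injOn (poincareDist_nonneg _ _) ht hxR,
    cosh_injOn (poincareDist_nonneg _ _) (sub_nonneg.2 hty) hRy⟩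

/-! ### The hyperbolic ball with a given diameter -/

/-- The Euclidean centre of the hyperbolic ball with diameter `x, y`. In the hyperboloid model the
hyperbolic centre is proportional to the sum of the two points; the weights come from transporting
this to the ball. -/
noncomputable def diameterBallCenter (x y : E) : E :=
  ((1 - ‖x‖ ^ 2) + (1 - ‖y‖ ^ 2) + ‖x - y‖ ^ 2)⁻¹ • ((1 - ‖y‖ ^ 2) • x + (1 - ‖x‖ ^ 2) • y)

lemma diameterBallCenter_comm (x y : E) : diameterBallCenter x y = diameterBallCenter y x := by
  rw [diameterBallCenter, diameterBallCenter, norm_sub_rev, add_comm (1 - ‖x‖ ^ 2),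
    add_comm (_ • x)]

lemma dist_diameterBallCenter (hx : ‖x‖ < 1) (hy : ‖y‖ < 1) :
    dist x (diameterBallCenter x y) =
      √(‖x - y‖ ^ 2 * ((1 - ‖x‖ ^ 2) * (1 - ‖y‖ ^ 2) + ‖x - y‖ ^ 2)) /
        ((1 - ‖x‖ ^ 2) + (1 - ‖y‖ ^ 2) + ‖x - y‖ ^ 2) := by
  have hp := one_sub_norm_sq_pos hx
  have hq := one_sub_norm_sq_pos hy
  have hdiff : x - diameterBallCenter x y = ((1 - ‖x‖ ^ 2) + (1 - ‖y‖ ^ 2) + ‖x - y‖ ^ 2)⁻¹ •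
      ((1 - ‖x‖ ^ 2) • (x - y) + ‖x - y‖ ^ 2 • x) := by
    rw [diameterBallCenter]
    match_scalars <;> field_simp; ring
  have hinner : 2 * inner ℝ (x - y) x = ‖x - y‖ ^ 2 + ‖x‖ ^ 2 - ‖y‖ ^ 2 := by
    rw [norm_sub_sq_real, inner_sub_left, real_inner_self_eq_norm_sq, real_inner_comm]
    ring
  have hnorm : ‖(1 - ‖x‖ ^ 2) • (x - y) + ‖x - y‖ ^ 2 • x‖ ^ 2 =
      ‖x - y‖ ^ 2 * ((1 - ‖x‖ ^ 2) * (1 - ‖y‖ ^ 2) + ‖x - y‖ ^ 2) := by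
    rw [norm_add_sq_real, norm_smul, norm_smul, real_inner_smul_left, real_inner_smul_right,
      norm_of_nonneg hp.le, norm_of_nonneg (sq_nonneg ‖x - y‖)]
    linear_combination (1 - ‖x‖ ^ 2) * ‖x - y‖ ^ 2 * hinner
  rw [dist_eq_norm, hdiff, norm_smul, norm_of_nonneg (by positivity), ← hnorm,
    sqrt_sq (norm_nonneg _), inv_mul_eq_div]

lemma norm_diameterBallCenter_le (hx : ‖x‖ < 1) (hy : ‖y‖ < 1) :
    ‖diameterBallCenter x y‖ ≤
      ((1 - ‖x‖ ^ 2) + (1 - ‖y‖ ^ 2) - (1 - ‖x‖ ^ 2) * (1 - ‖y‖ ^ 2)) /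
        ((1 - ‖x‖ ^ 2) + (1 - ‖y‖ ^ 2) + ‖x - y‖ ^ 2) := by
  have hp := one_sub_norm_sq_pos hx
  have hq := one_sub_norm_sq_pos hy
  have hfactor : 0 ≤ (1 - ‖x‖) * (1 - ‖y‖) * (1 - ‖x‖ * ‖y‖) :=
    mul_nonneg (mul_nonneg (sub_nonneg.2 hx.le) (sub_nonneg.2 hy.le))
      (sub_nonneg.2 (mul_le_one₀ hx.le (norm_nonneg y) hy.le))
  rw [diameterBallCenter, norm_smul, norm_of_nonneg (by positivity), inv_mul_eq_div]
  gcongr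
  calc ‖(1 - ‖y‖ ^ 2) • x + (1 - ‖x‖ ^ 2) • y‖
      ≤ (1 - ‖y‖ ^ 2) * ‖x‖ + (1 - ‖x‖ ^ 2) * ‖y‖ := by
        refine (norm_add_le _ _).trans_eq ?_
        rw [norm_smul, norm_smul, norm_of_nonneg hp.le, norm_of_nonneg hq.le]
    _ ≤ (1 - ‖x‖ ^ 2) + (1 - ‖y‖ ^ 2) - (1 - ‖x‖ ^ 2) * (1 - ‖y‖ ^ 2) := by
        linear_combination hfactor

lemma norm_diameterBallCenter_lt_one (hx : ‖x‖ < 1) (hy : ‖y‖ < 1) :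
    ‖diameterBallCenter x y‖ < 1 := by
  have hp := one_sub_norm_sq_pos hx
  have hq := one_sub_norm_sq_pos hy
  refine (norm_diameterBallCenter_le hx hy).trans_lt ((div_lt_one (by positivity)).2 ?_)
  linarith [mul_pos hp hq, sq_nonneg ‖x - y‖]

lemma mem_closedBall_diameterBallCenter (hs : s ∈ Ioo 0 1) (hx : ‖x‖ < 1) (hy : ‖y‖ < 1)
    (hxy : poincareDist x y ≤ log ((1 + s) / (1 - s))) :
    x ∈ closedBall (diameterBallCenter x y) (s * (1 - ‖diameterBallCenter x y‖)) := by
  have hp := one_sub_norm_sq_pos hx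
  have hq := one_sub_norm_sq_pos hy
  have hs₀ := hs.1
  have hsq := norm_sub_sq_le_of_poincareDist_le hs hx hy hxy
  have hcenter := norm_diameterBallCenter_le hx hy
  have hdist := dist_diameterBallCenter hx hy
  set m := (1 - ‖x‖ ^ 2) * (1 - ‖y‖ ^ 2) + ‖x - y‖ ^ 2 with hm
  set N := (1 - ‖x‖ ^ 2) + (1 - ‖y‖ ^ 2) + ‖x - y‖ ^ 2 with hN
  have hm₀ : 0 ≤ m := by positivity
  have hN₀ : 0 < N := by positivity
  have hsqrt : √(‖x - y‖ ^ 2 * m) ≤ s * m :=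
    sqrt_le_iff.2 ⟨by positivity, by nlinarith⟩
  rw [mem_closedBall]
  calc dist x (diameterBallCenter x y) = √(‖x - y‖ ^ 2 * m) / N := hdist
    _ ≤ s * m / N := by gcongr
    _ = s * (1 - ((1 - ‖x‖ ^ 2) + (1 - ‖y‖ ^ 2) - (1 - ‖x‖ ^ 2) * (1 - ‖y‖ ^ 2)) / N) := by
        field_simp
        rw [hm, hN]
        ring
    _ ≤ s * (1 - ‖diameterBallCenter x y‖) := by gcongr

/-! ### Harnack chains -/

/-- The `(s, C)`-Harnack inequality for functions on a subset of a metric space, which is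
`SatisfiesHarnack` on `ℝⁿ`. -/
def HarnackInequalityOn {X : Type*} [PseudoMetricSpace X] (u : X → ℝ) (G : Set X) (s C : ℝ) :
    Prop :=
  ∀ x ∈ G, ∀ r > (0 : ℝ), ball x r ⊆ G →
    ∀ z₁ ∈ closedBall x (s * r), ∀ z₂ ∈ closedBall x (s * r), u z₁ ≤ C * u z₂

lemma log_one_add_div_one_sub_pos (hs : s ∈ Ioo 0 1) : 0 < log ((1 + s) / (1 - s)) :=
  log_pos ((one_lt_div (sub_pos.2 hs.2)).2 (by linarith [hs.1]))

namespace HarnackInequalityOn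

variable {u : E → ℝ}

lemma le_mul_of_poincareDist_le (hu : HarnackInequalityOn u (ball 0 1) s C)
    (hs : s ∈ Ioo 0 1) (hx : ‖x‖ < 1) (hy : ‖y‖ < 1)
    (hxy : poincareDist x y ≤ log ((1 + s) / (1 - s))) : u x ≤ C * u y := by
  have hc := norm_diameterBallCenter_lt_one hx hy
  refine hu (diameterBallCenter x y) (mem_ball_zero_iff.2 hc) (1 - ‖diameterBallCenter x y‖)
    (sub_pos.2 hc) (ball_subset_ball' ?_) x (mem_closedBall_diameterBallCenter hs hx hy hxy) y ?_
  · rw [dist_zero_right, sub_add_cancel]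
  · rw [diameterBallCenter_comm]
    rw [poincareDist_comm] at hxy
    exact mem_closedBall_diameterBallCenter hs hy hx hxy

lemma le_pow_mul_of_poincareDist_le (hu : HarnackInequalityOn u (ball 0 1) s C)
    (hs : s ∈ Ioo 0 1) (hC : 0 ≤ C) (hx : ‖x‖ < 1) (hy : ‖y‖ < 1) (k : ℕ)
    (hxy : poincareDist x y ≤ k * log ((1 + s) / (1 - s))) :
    u x ≤ C ^ k * u y := by
  induction k generalizing x with
  | zero =>
    rw [Nat.cast_zero, zero_mul] at hxy
    rw [eq_of_poincareDist_nonpos hx hy hxy, pow_zero, one_mul]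
  | succ k ih =>
    have hL := (log_one_add_div_one_sub_pos hs).le
    obtain ⟨z, hz, hxz, hzy⟩ := exists_poincareDist_eq hx hy
      (le_min hL (poincareDist_nonneg x y)) (min_le_right _ _)
    have hzy_le : poincareDist z y ≤ k * log ((1 + s) / (1 - s)) := by
      rw [hzy, sub_le_comm, le_min_iff]
      push_cast at hxy
      exact ⟨by linarith, sub_le_self _ (by positivity)⟩
    calc u x ≤ C * u z := hu.le_mul_of_poincareDist_le hs hx hz (hxz.trans_le (min_le_left _ _))
      _ ≤ C * (C ^ k * u y) := by gcongr; exact ih hz hzy_le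
      _ = C ^ (k + 1) * u y := by ring

lemma abs_log_div_le_mul_log (hu : HarnackInequalityOn u (ball 0 1) s C)
    (hs : s ∈ Ioo 0 1) (hC : 0 < C) (hx : ‖x‖ < 1) (hy : ‖y‖ < 1) (hux : 0 < u x)
    (huy : 0 < u y) (k : ℕ)
    (hxy : poincareDist x y ≤ k * log ((1 + s) / (1 - s))) :
    |log (u x / u y)| ≤ k * log C := by
  have hle := hu.le_pow_mul_of_poincareDist_le hs hC.le hx hy k hxy
  have hge := hu.le_pow_mul_of_poincareDist_le hs hC.le hy hx k (poincareDist_comm x y ▸ hxy)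
  rw [← log_pow, abs_le, neg_le, ← log_inv, inv_div]
  exact ⟨log_le_log (by positivity) ((div_le_iff₀ hux).2 hge),
    log_le_log (by positivity) ((div_le_iff₀ huy).2 hle)⟩

end HarnackInequalityOn

theorem stmt_6_general {u : E → ℝ} (hs : s ∈ Ioo 0 1) (hC : 1 ≤ C)
    (hpos : ∀ z ∈ ball (0 : E) 1, 0 < u z) (hu : HarnackInequalityOn u (ball 0 1) s C)
    (hx : x ∈ ball 0 1) (hy : y ∈ ball 0 1) :
    |log (u x / u y)| ≤ (1 + poincareDist x y / log ((1 + s) / (1 - s))) * log C := by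
  have hL := log_one_add_div_one_sub_pos hs
  have hρ := poincareDist_nonneg x y
  set k := ⌈poincareDist x y / log ((1 + s) / (1 - s))⌉₊
  have hρk : poincareDist x y ≤ k * log ((1 + s) / (1 - s)) :=
    (div_le_iff₀ hL).1 (Nat.le_ceil _)
  calc |log (u x / u y)| ≤ k * log C :=
        hu.abs_log_div_le_mul_log hs (by positivity) (mem_ball_zero_iff.1 hx)
          (mem_ball_zero_iff.1 hy) (hpos x hx) (hpos y hy) k hρk
    _ ≤ (1 + poincareDist x y / log ((1 + s) / (1 - s))) * log C := by
        rw [add_comm]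
        exact mul_le_mul_of_nonneg_right (Nat.ceil_lt_add_one (by positivity)).le (log_nonneg hC)

end PoincareBall

/-- If every positive harmonic function on the unit ball `𝔹ⁿ` satisfies the `(s, C)`-Harnack
inequality in `𝔹ⁿ`, then the Harnack metric satisfies
`h(x,y) ≤ (1 + ρ(x,y)/log((1+s)/(1-s))) log C` for all `x, y ∈ 𝔹ⁿ`. -/
theorem stmt_6 {n : ℕ} (s C : ℝ) (hs : s ∈ Ioo (0 : ℝ) 1) (hC : 1 ≤ C)
    (hH : ∀ u : EuclideanSpace ℝ (Fin n) → ℝ,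
      (∀ z ∈ ball (0 : EuclideanSpace ℝ (Fin n)) 1, 0 < u z) →
      IsHarmonicOn u (ball (0 : EuclideanSpace ℝ (Fin n)) 1) →
      SatisfiesHarnack u (ball (0 : EuclideanSpace ℝ (Fin n)) 1) s C)
    (x y : EuclideanSpace ℝ (Fin n))
    (hx : x ∈ ball (0 : EuclideanSpace ℝ (Fin n)) 1)
    (hy : y ∈ ball (0 : EuclideanSpace ℝ (Fin n)) 1) :
    harnackMetric (ball (0 : EuclideanSpace ℝ (Fin n)) 1) x y ≤
      (1 + rhoB x y / Real.log ((1 + s) / (1 - s))) * Real.log C := by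
  refine Real.sSup_le ?_ (mul_nonneg (add_nonneg zero_le_one (div_nonneg
    (poincareDist_nonneg x y) (log_one_add_div_one_sub_pos hs).le)) (Real.log_nonneg hC))
  rintro _ ⟨u, hpos, hharm, rfl⟩
  exact stmt_6_general hs hC hpos (hH u hpos hharm) hx hy
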